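/- Let f, g : ℝⁿ → ℝⁿ, let Φ : ℝⁿ → ℝⁿ be differentiable and satisfy the solution-preserving identity DΦ(x)·f(x) = g(Φ(x)) for all x, and let A : ℝ → Matrix (Fin n) (Fin n) ℝ be differentiable with A(t) invertible for every t. Define Γ(t,x) := A(t)·Φ(A(t)⁻¹·x). If z : ℝ → ℝⁿ is differentiable and satisfies z'(t) = f*(t, z(t)) for all t, where f* is the gauge transform of f by A, then the curve y(t) := Γ(t, z(t)) satisfies y'(t) = g*(t, y(t)) for all t, where g* is the gauge transform of g by A. -/

import Mathlib

open Matrix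

/-!
The gauge transform is the change of variables `z = A x`: a curve `z` solves `f*` exactly when
`x = A⁻¹ z` solves `ẋ = f(x)`, because `(A⁻¹)' = -A⁻¹ A' A⁻¹` cancels the linear term of `f*`. Hence
`Γ` takes `z` back to a solution `x` of `f`, sends it by `Φ` to a solution of `g`, and multiplies
by `A` to reach a solution of `g*`.
-/

open scoped Ring

theorem map_ringInverse {M N G : Type*} [MonoidWithZero M] [MonoidWithZero N] [EquivLike G M N]
    [MulEquivClass G M N] (e : G) (a : M) : e a⁻¹ʳ = (e a)⁻¹ʳ := by
  by_cases ha : IsUnit a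
  · obtain ⟨u, rfl⟩ := ha
    exact (congrArg e (Ring.inverse_unit u)).trans
      (Ring.inverse_unit (Units.map (e : M →* N) u)).symm
  · rw [Ring.inverse_non_unit a ha, Ring.inverse_non_unit (e a) (by simpa using ha), map_zero]

section GaugeTransform

variable {𝕜 E F : Type*} [NontriviallyNormedField 𝕜] [NormedAddCommGroup E] [NormedSpace 𝕜 E]
  [NormedAddCommGroup F] [NormedSpace 𝕜 F]

theorem hasDerivAt_ringInverse_comp {R : Type*} [NormedRing R] [HasSummableGeomSeries R]
    [NormedAlgebra 𝕜 R] {a : 𝕜 → R} {a' : R} {t : 𝕜} (ha : HasDerivAt a a' t)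
    (hat : IsUnit (a t)) :
    HasDerivAt (fun s => (a s)⁻¹ʳ) (-((a t)⁻¹ʳ * a' * (a t)⁻¹ʳ)) t := by
  obtain ⟨u, hu⟩ := hat
  rw [← hu, Ring.inverse_unit]
  exact (hasFDerivAt_ringInverse (𝕜 := 𝕜) u).comp_hasDerivAt_of_eq t ha hu

theorem ringInverse_apply_apply {L : E →L[𝕜] E} (hL : IsUnit L) (x : E) : L⁻¹ʳ (L x) = x :=
  DFunLike.congr_fun (Ring.inverse_mul_cancel L hL) x

/-- The gauge transform `f*(t, y) = A'(t) A(t)⁻¹ y + A(t) f(A(t)⁻¹ y)` of the autonomous vector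
field `f` by a curve `A` of bounded operators: the field solved by `A(t) x(t)` when `x` solves
`ẋ = f(x)`. The derivative `A'` is passed as a separate argument, and the inverse is `Ring.inverse`,
which is `0` at operators that are not invertible. -/
noncomputable def gaugeTransform (A A' : 𝕜 → E →L[𝕜] E) (f : E → E) (t : 𝕜) (y : E) : E :=
  A' t ((A t)⁻¹ʳ y) + A t (f ((A t)⁻¹ʳ y))

theorem hasDerivAt_apply_gaugeTransform {A A' : 𝕜 → E →L[𝕜] E} {f : E → E} {x : 𝕜 → E} {t : 𝕜}
    (hA : HasDerivAt A (A' t) t) (hAt : IsUnit (A t)) (hx : HasDerivAt x (f (x t)) t) :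
    HasDerivAt (fun s => A s (x s)) (gaugeTransform A A' f t (A t (x t))) t := by
  simpa only [gaugeTransform, ringInverse_apply_apply hAt] using hA.clm_apply hx

theorem hasDerivAt_ringInverse_apply_of_gaugeTransform [CompleteSpace E]
    {A A' : 𝕜 → E →L[𝕜] E} {f : E → E} {z : 𝕜 → E} {t : 𝕜} (hA : HasDerivAt A (A' t) t)
    (hAt : IsUnit (A t)) (hz : HasDerivAt z (gaugeTransform A A' f t (z t)) t) :
    HasDerivAt (fun s => (A s)⁻¹ʳ (z s)) (f ((A t)⁻¹ʳ (z t))) t := by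
  have hderiv := (hasDerivAt_ringInverse_comp hA hAt).clm_apply hz
  have hcancel : (-((A t)⁻¹ʳ * A' t * (A t)⁻¹ʳ)) (z t) + (A t)⁻¹ʳ (gaugeTransform A A' f t (z t)) =
      f ((A t)⁻¹ʳ (z t)) := by
    simp [gaugeTransform, ringInverse_apply_apply hAt]
  rwa [hcancel] at hderiv

theorem gauge_transform_solution_preserving_general [CompleteSpace E]
    {f : E → E} {g : F → F} {Φ : E → F} {Φ' : E →L[𝕜] F}
    {A A' : 𝕜 → E →L[𝕜] E} {B B' : 𝕜 → F →L[𝕜] F} {z : 𝕜 → E} {t : 𝕜}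
    (hΦ : HasFDerivAt Φ Φ' ((A t)⁻¹ʳ (z t)))
    (hsp : Φ' (f ((A t)⁻¹ʳ (z t))) = g (Φ ((A t)⁻¹ʳ (z t))))
    (hA : HasDerivAt A (A' t) t) (hAt : IsUnit (A t))
    (hB : HasDerivAt B (B' t) t) (hBt : IsUnit (B t))
    (hz : HasDerivAt z (gaugeTransform A A' f t (z t)) t) :
    HasDerivAt (fun s => B s (Φ ((A s)⁻¹ʳ (z s))))
      (gaugeTransform B B' g t (B t (Φ ((A t)⁻¹ʳ (z t))))) t := by
  have hx : HasDerivAt (fun s => (A s)⁻¹ʳ (z s)) (f ((A t)⁻¹ʳ (z t))) t :=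
    hasDerivAt_ringInverse_apply_of_gaugeTransform hA hAt hz
  have hΦx : HasDerivAt (fun s => Φ ((A s)⁻¹ʳ (z s))) (g (Φ ((A t)⁻¹ʳ (z t)))) t :=
    hsp ▸ hΦ.comp_hasDerivAt t hx
  exact hasDerivAt_apply_gaugeTransform hB hBt hΦx

end GaugeTransform

section MatrixOperator

/-- The algebra isomorphism sending a square matrix `M` to the bounded operator `v ↦ M *ᵥ v`; it
carries statements about curves of operators over to curves of matrices. -/
noncomputable def matrixEquivCLM (𝕜 ι : Type*) [NontriviallyNormedField 𝕜] [CompleteSpace 𝕜]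
    [Fintype ι] [DecidableEq ι] : Matrix ι ι 𝕜 ≃ₐ[𝕜] ((ι → 𝕜) →L[𝕜] (ι → 𝕜)) :=
  Matrix.toLinAlgEquiv'.trans (Module.End.toContinuousLinearMap (ι → 𝕜))

variable {𝕜 ι : Type*} [NontriviallyNormedField 𝕜] [CompleteSpace 𝕜] [Fintype ι] [DecidableEq ι]

theorem matrixEquivCLM_apply (M : Matrix ι ι 𝕜) (v : ι → 𝕜) : matrixEquivCLM 𝕜 ι M v = M *ᵥ v :=
  rfl

theorem ringInverse_matrixEquivCLM (M : Matrix ι ι 𝕜) :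
    (matrixEquivCLM 𝕜 ι M)⁻¹ʳ = matrixEquivCLM 𝕜 ι M⁻¹ := by
  rw [Matrix.nonsing_inv_eq_ringInverse, map_ringInverse]

open scoped Matrix.Norms.Elementwise in
theorem hasDerivAt_matrixEquivCLM {A : 𝕜 → Matrix ι ι 𝕜} {A' : Matrix ι ι 𝕜} {t : 𝕜}
    (hA : ∀ i j, HasDerivAt (fun s => A s i j) (A' i j) t) :
    HasDerivAt (fun s => matrixEquivCLM 𝕜 ι (A s)) (matrixEquivCLM 𝕜 ι A') t := by
  have hmatrix : HasDerivAt A A' t := hasDerivAt_pi.2 fun i => hasDerivAt_pi.2 (hA i)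
  let L : Matrix ι ι 𝕜 →L[𝕜] ((ι → 𝕜) →L[𝕜] (ι → 𝕜)) :=
    (matrixEquivCLM 𝕜 ι).toLinearMap.toContinuousLinearMap
  exact L.hasFDerivAt.comp_hasDerivAt t hmatrix

theorem gaugeTransform_matrixEquivCLM (A A' : 𝕜 → Matrix ι ι 𝕜) (f : (ι → 𝕜) → (ι → 𝕜)) (t : 𝕜)
    (y : ι → 𝕜) :
    gaugeTransform (fun s => matrixEquivCLM 𝕜 ι (A s)) (fun s => matrixEquivCLM 𝕜 ι (A' s)) f t y =
      A' t *ᵥ ((A t)⁻¹ *ᵥ y) + A t *ᵥ f ((A t)⁻¹ *ᵥ y) := by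
  simp only [gaugeTransform, ringInverse_matrixEquivCLM, matrixEquivCLM_apply]

end MatrixOperator

/-- **Solution-preserving maps and gauge transforms.**
If the differentiable map `Φ` sends solutions of `ẋ = f(x)` to solutions of `ẋ = g(x)`
(i.e. `DΦ(x)·f(x) = g(Φ(x))` for all `x`), and `z` solves the gauge transform `f*` of `f` by
`A(t)`, then `y(t) := Γ(t, z(t)) := A(t)·Φ(A(t)⁻¹·z(t))` solves the gauge transform `g*`
of `g` by `A(t)`. -/
theorem gauge_transform_solution_preserving {n : ℕ}
    (f g : (Fin n → ℝ) → (Fin n → ℝ))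
    (Φ : (Fin n → ℝ) → (Fin n → ℝ))
    (Φ' : (Fin n → ℝ) → ((Fin n → ℝ) →L[ℝ] (Fin n → ℝ)))
    (hΦ : ∀ x, HasFDerivAt Φ (Φ' x) x)
    (hsp : ∀ x, Φ' x (f x) = g (Φ x))
    (A A' : ℝ → Matrix (Fin n) (Fin n) ℝ)
    (hA : ∀ t, ∀ i j, HasDerivAt (fun s => A s i j) (A' t i j) t)
    (hAinv : ∀ t, IsUnit (A t))
    (z : ℝ → Fin n → ℝ)
    (hz : ∀ t, HasDerivAt z
      ((A' t).mulVec ((A t)⁻¹.mulVec (z t)) +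
        (A t).mulVec (f ((A t)⁻¹.mulVec (z t)))) t) :
    ∀ t, HasDerivAt (fun s => (A s).mulVec (Φ ((A s)⁻¹.mulVec (z s))))
      ((A' t).mulVec ((A t)⁻¹.mulVec ((A t).mulVec (Φ ((A t)⁻¹.mulVec (z t))))) +
        (A t).mulVec (g ((A t)⁻¹.mulVec ((A t).mulVec (Φ ((A t)⁻¹.mulVec (z t))))))) t := by
  intro t
  have hAt := (hAinv t).map (matrixEquivCLM ℝ (Fin n))
  have hderiv := hasDerivAt_matrixEquivCLM (hA t)
  have hzt := hz t
  rw [← gaugeTransform_matrixEquivCLM A A' f] at hzt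
  rw [← gaugeTransform_matrixEquivCLM A A' g]
  simp only [← matrixEquivCLM_apply, ← ringInverse_matrixEquivCLM]
  exact gauge_transform_solution_preserving_general (hΦ _) (hsp _) hderiv hAt hderiv hAt hzt
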